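/- arXiv:1110.1713 — 2 statements merged into one kernel-verified Lean document; each statement's English description precedes it below -/
import Mathlib

section
/- For every α > 2 there exist constants C > 0 and L₀ > 2 such that for every L ≥ L₀ and every x = (x₁,x₂,a) ∈ G with r(x) ≥ (log L)^α, the function f_L = χ_{R_L} − χ_{R₀} satisfies sup_{t>0} |f_L ∗ p_t(x)| ≤ C (L³/a²) · r(x)⁻² · (sinh r(x))⁻² · (L + |x|). -/
open MeasureTheory Real Filter Set
open scoped ENNReal

noncomputable section

/-- The group `G = ℝ² ⋊ ℝ⁺`, realized as triples `(x₁, x₂, a)` (only `a > 0` is relevant). -/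
abbrev G : Type := ℝ × ℝ × ℝ

/-- Group product `(x₁,x₂,a)·(x₁',x₂',a') = (x₁+a x₁', x₂+a x₂', a a')`. -/
def gMul (x y : G) : G := (x.1 + x.2.2 * y.1, x.2.1 + x.2.2 * y.2.1, x.2.2 * y.2.2)

/-- Group inverse `(x₁,x₂,a)⁻¹ = (−x₁/a, −x₂/a, 1/a)`. -/
def gInv (x : G) : G := (-x.1 / x.2.2, -x.2.1 / x.2.2, 1 / x.2.2)

/-- The identity `e = (0,0,1)`. -/
def gE : G := (0, 0, 1)

/-- The right Haar measure `dρ = a⁻¹ dx₁ dx₂ da` (supported where `a > 0`). -/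
def ρG : Measure G :=
  (volume : Measure G).withDensity fun x => ENNReal.ofReal (if 0 < x.2.2 then x.2.2⁻¹ else 0)

/-- The modular function `δ(x₁,x₂,a) = a⁻²`. -/
def deltaG (x : G) : ℝ := (x.2.2 ^ 2)⁻¹

/-- `|x| = √(x₁² + x₂²)`. -/
def normG (x : G) : ℝ := Real.sqrt (x.1 ^ 2 + x.2.1 ^ 2)

/-- `cosh r(x) = (a + a⁻¹ + a⁻¹|x|²)/2`. -/
def coshArg (x : G) : ℝ := (x.2.2 + x.2.2⁻¹ + x.2.2⁻¹ * (x.1 ^ 2 + x.2.1 ^ 2)) / 2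

/-- `r(x) ≥ 0` is determined by `cosh r(x) = coshArg x`; explicitly `r = arcosh (coshArg x)`. -/
def rG (x : G) : ℝ := Real.log (coshArg x + Real.sqrt (coshArg x ^ 2 - 1))

/-- The left-invariant distance `d(x,y) = r(x⁻¹y)`. -/
def dG (x y : G) : ℝ := rG (gMul (gInv x) y)

/-- The heat kernel
`p_t(x) = (8π^{3/2})⁻¹ δ(x)^{1/2} (r(x)/sinh r(x)) t^{−3/2} exp(−r(x)²/(4t))`,
with `r/sinh r := 1` at `x = e`. -/
def heatK (t : ℝ) (x : G) : ℝ :=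
  (8 * Real.pi ^ ((3 : ℝ)/2))⁻¹ * Real.sqrt (deltaG x) *
    (if rG x = 0 then 1 else rG x / Real.sinh (rG x)) *
    t ^ (-(3 : ℝ)/2) * Real.exp (-(rG x ^ 2) / (4 * t))

/-- Convolution `f ∗ p_t(x) = ∫ f(xy⁻¹) p_t(y) dρ(y)`. -/
def convHeat (f : G → ℝ) (t : ℝ) (x : G) : ℝ := ∫ y, f (gMul x (gInv y)) * heatK t y ∂ρG

/-- The heat maximal operator `Mf(x) = sup_{t>0} |f ∗ p_t(x)|` (valued in `ℝ≥0∞`). -/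
def maxHeat (f : G → ℝ) (x : G) : ℝ≥0∞ :=
  ⨆ (t : ℝ) (_ : 0 < t), ENNReal.ofReal |convHeat f t x|

/-- Calderón–Zygmund sets. -/
def IsCZ (R : Set G) : Prop :=
  ∃ c : G, ∃ L r : ℝ, 0 < c.2.2 ∧ 0 < L ∧ 0 < r ∧
    R = Set.Icc (c.1 - L/2) (c.1 + L/2) ×ˢ
        (Set.Icc (c.2.1 - L/2) (c.2.1 + L/2) ×ˢ
         Set.Icc (c.2.2 * Real.exp (-r)) (c.2.2 * Real.exp r)) ∧
    (r < 1 → Real.exp 2 * c.2.2 * r ≤ L ∧ L < Real.exp 8 * c.2.2 * r) ∧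
    (1 ≤ r → c.2.2 * Real.exp (2*r) ≤ L ∧ L < c.2.2 * Real.exp (8*r))

/-- Atoms: `A ∈ L¹(ρ)` supported in a Calderón–Zygmund set `R`, with
`‖A‖_∞ ≤ ρ(R)⁻¹` and `∫ A dρ = 0`. -/
def IsAtomG (A : G → ℝ) : Prop :=
  Integrable A ρG ∧
  ∃ R : Set G, IsCZ R ∧ (∀ x ∉ R, A x = 0) ∧
    eLpNorm A ⊤ ρG ≤ (ρG R)⁻¹ ∧
    ∫ x, A x ∂ρG = 0

/-- `f = Σ_j lam_j A_j` with atoms `A_j`, `Σ_j |lam_j| < ∞`, converging in `L¹(ρ)`. -/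
def IsH1Decomp (f : G → ℝ) (lam : ℕ → ℝ) (A : ℕ → G → ℝ) : Prop :=
  (∀ j, IsAtomG (A j)) ∧ Summable (fun j => |lam j|) ∧
  Tendsto (fun N => eLpNorm (fun x => f x - ∑ j ∈ Finset.range N, lam j * A j x) 1 ρG)
    atTop (nhds 0)

/-- The Hardy space `H¹`. -/
def MemH1 (f : G → ℝ) : Prop :=
  Integrable f ρG ∧ ∃ lam A, IsH1Decomp f lam A

/-- `‖f‖_{H¹} = inf Σ_j |lam_j|` over all atomic decompositions. -/
def H1norm (f : G → ℝ) : ℝ :=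
  sInf {s | ∃ lam A, IsH1Decomp f lam A ∧ s = ∑' j, |lam j|}

/-- The left-invariant vector field `X₀ = a ∂_a`. -/
def X0 (f : G → ℝ) (x : G) : ℝ := x.2.2 * deriv (fun s => f (x.1, x.2.1, s)) x.2.2

/-- The left-invariant vector field `X₁ = a ∂_{x₁}`. -/
def X1 (f : G → ℝ) (x : G) : ℝ := x.2.2 * deriv (fun s => f (s, x.2.1, x.2.2)) x.1

/-- The left-invariant vector field `X₂ = a ∂_{x₂}`. -/
def X2 (f : G → ℝ) (x : G) : ℝ := x.2.2 * deriv (fun s => f (x.1, s, x.2.2)) x.2.1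

/-- `‖∇p_t(x)‖`, the Euclidean norm of `(X₀p_t, X₁p_t, X₂p_t)` at `x`. -/
def gradHeatNorm (t : ℝ) (x : G) : ℝ :=
  Real.sqrt (X0 (heatK t) x ^ 2 + X1 (heatK t) x ^ 2 + X2 (heatK t) x ^ 2)

/-- The Poisson kernel `q_t(x) = π⁻² δ(x)^{1/2} (r(x)/sinh r(x)) · t/(t²+r(x)²)²`. -/
def poissonK (t : ℝ) (x : G) : ℝ :=
  (Real.pi ^ 2)⁻¹ * Real.sqrt (deltaG x) *
    (if rG x = 0 then 1 else rG x / Real.sinh (rG x)) *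
    (t / (t ^ 2 + rG x ^ 2) ^ 2)

/-- Convolution `f ∗ q_t(x) = ∫ f(xy⁻¹) q_t(y) dρ(y)`. -/
def convPoisson (f : G → ℝ) (t : ℝ) (x : G) : ℝ := ∫ y, f (gMul x (gInv y)) * poissonK t y ∂ρG

/-- The Poisson maximal operator `M̃f(x) = sup_{t>0} |f ∗ q_t(x)|`. -/
def maxPoisson (f : G → ℝ) (x : G) : ℝ≥0∞ :=
  ⨆ (t : ℝ) (_ : 0 < t), ENNReal.ofReal |convPoisson f t x|

/-- `G_{r₁}(x) = sup_{z ∈ B(x,r₁/2)} sup_{t>0} ‖∇p_t(z)‖`. -/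
def Gsup (r1 : ℝ) (x : G) : ℝ≥0∞ :=
  ⨆ (z : G) (_ : 0 < z.2.2 ∧ dG x z < r1 / 2) (t : ℝ) (_ : 0 < t),
    ENNReal.ofReal (gradHeatNorm t z)

/-- `R₀ = [−1,1]×[−1,1]×[e⁻¹,e]`. -/
def R0set : Set G :=
  Set.Icc (-1 : ℝ) 1 ×ˢ (Set.Icc (-1 : ℝ) 1 ×ˢ Set.Icc (Real.exp (-1)) (Real.exp 1))

/-- `R_L = [L−1,L+1]×[−1,1]×[e⁻¹,e]`. -/
def RLset (L : ℝ) : Set G :=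
  Set.Icc (L - 1) (L + 1) ×ˢ (Set.Icc (-1 : ℝ) 1 ×ˢ Set.Icc (Real.exp (-1)) (Real.exp 1))

/-- `f_L = χ_{R_L} − χ_{R₀}`. -/
def fL (L : ℝ) : G → ℝ := fun x =>
  (RLset L).indicator (fun _ => (1 : ℝ)) x - R0set.indicator (fun _ => (1 : ℝ)) x

/-- The mean of `g` over `R` with respect to `ρ`. -/
def czMean (g : G → ℝ) (R : Set G) : ℝ := (∫ x in R, g x ∂ρG) / (ρG R).toReal

/-- `‖g‖_{BMO} = sup_R ρ(R)⁻¹ ∫_R |g − g_R| dρ` over Calderón–Zygmund sets `R`. -/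
def czBMO (g : G → ℝ) : ℝ≥0∞ :=
  ⨆ (R : Set G) (_ : IsCZ R),
    (ρG R)⁻¹ * ∫⁻ x in R, ENNReal.ofReal |g x - czMean g R| ∂ρG

/-- `‖h‖_{BMO(ℝ)} = sup_Q |Q|⁻¹ ∫_Q |h − h_Q|` over bounded intervals `Q ⊂ ℝ`. -/
def lineBMO (h : ℝ → ℝ) : ℝ≥0∞ :=
  ⨆ (a : ℝ) (b : ℝ) (_ : a < b),
    (ENNReal.ofReal (b - a))⁻¹ *
      ∫⁻ s in Set.Icc a b, ENNReal.ofReal |h s - (∫ u in Set.Icc a b, h u) / (b - a)|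

/-- `2R₀ = [−2,2]×[−2,2]×[e⁻²,e²]`. -/
def twoR0set : Set G :=
  Set.Icc (-2 : ℝ) 2 ×ˢ (Set.Icc (-2 : ℝ) 2 ×ˢ Set.Icc (Real.exp (-2)) (Real.exp 2))

/-- The set `{x₁ > 3, |x₂| < 1, e⁻¹ < a < e}`. -/
def domSpecial : Set G :=
  {x : G | 3 < x.1 ∧ |x.2.1| < 1 ∧ Real.exp (-1) < x.2.2 ∧ x.2.2 < Real.exp 1}

/-- The function equal to `1/(x₁ (log x₁)^{3/2})` on `{x₁ > 3, |x₂| < 1, e⁻¹ < a < e}`,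
to `c₀` on `R₀`, and `0` elsewhere. -/
def fSpecial (c0 : ℝ) : G → ℝ := fun x =>
  domSpecial.indicator (fun y => (y.1 * Real.log y.1 ^ ((3 : ℝ)/2))⁻¹) x
    + R0set.indicator (fun _ => c0) x

def psiH (t r : ℝ) : ℝ := r / Real.sinh r * t ^ (-(3 : ℝ)/2) * Real.exp (-(r ^ 2) / (4 * t))

lemma gauss_aux (v : ℝ) (hv : 0 ≤ v) (n : ℕ) (hn : n ≤ 6) :
    v ^ n * Real.exp (-(v ^ 2) / 4) ≤ 400 := by
  have h1 : v ^ n ≤ 1 + v ^ 6 := by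
    rcases le_total v 1 with h | h
    · have := pow_le_one₀ (n := n) hv h
      have h6 : 0 ≤ v ^ 6 := by positivity
      linarith
    · have := pow_le_pow_right₀ h hn
      linarith
  have h2 := Real.pow_div_factorial_le_exp (x := v ^ 2 / 4) (by positivity) 3
  have h3 : (1:ℝ) ≤ Real.exp (v ^ 2 / 4) := Real.one_le_exp (by positivity)
  have h4 : Real.exp (-(v ^ 2) / 4) * Real.exp (v ^ 2 / 4) = 1 := by
    rw [← Real.exp_add]; ring_nf; simp
  have h5 : v ^ n ≤ 400 * Real.exp (v ^ 2 / 4) := by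
    norm_num [Nat.factorial] at h2
    nlinarith
  calc v ^ n * Real.exp (-(v ^ 2) / 4) ≤ 400 * Real.exp (v ^ 2 / 4) * Real.exp (-(v ^ 2) / 4) := by gcongr
    _ = 400 * (Real.exp (-(v ^ 2) / 4) * Real.exp (v ^ 2 / 4)) := by ring
    _ = 400 := by rw [h4]; ring

lemma rpow_aux (t : ℝ) (ht : 0 < t) : t ^ (-(3 : ℝ)/2) = (Real.sqrt t)⁻¹ ^ 3 := by
  rw [Real.sqrt_eq_rpow, ← Real.rpow_neg ht.le, ← Real.rpow_natCast, ← Real.rpow_mul ht.le]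
  norm_num

lemma gauss3 (t r : ℝ) (ht : 0 < t) (hr : 0 < r) :
    t ^ (-(3 : ℝ)/2) * Real.exp (-(r ^ 2) / (4 * t)) ≤ 400 / r ^ 3 := by
  rw [rpow_aux t ht, le_div_iff₀ (by positivity)]
  have hs : 0 < Real.sqrt t := Real.sqrt_pos.2 ht
  have := gauss_aux (r * (Real.sqrt t)⁻¹) (by positivity) 3 (by norm_num)
  have e : -((r * (Real.sqrt t)⁻¹) ^ 2) / 4 = -(r ^ 2) / (4 * t) := by
    rw [mul_pow, inv_pow, Real.sq_sqrt ht.le]; field_simp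
  rw [e] at this
  linarith [this, mul_pow r (Real.sqrt t)⁻¹ 3, show (Real.sqrt t)⁻¹ ^ 3 * Real.exp (-(r ^ 2) / (4 * t)) * r ^ 3 = (r * (Real.sqrt t)⁻¹) ^ 3 * Real.exp (-(r ^ 2) / (4 * t)) by ring]

lemma gauss5 (t r : ℝ) (ht : 0 < t) (hr : 0 < r) :
    t ^ (-(3 : ℝ)/2) * Real.exp (-(r ^ 2) / (4 * t)) / t ≤ 400 / r ^ 5 := by
  have hs : 0 < Real.sqrt t := Real.sqrt_pos.2 ht
  have := gauss_aux (r * (Real.sqrt t)⁻¹) (by positivity) 5 (by norm_num)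
  have e : -((r * (Real.sqrt t)⁻¹) ^ 2) / 4 = -(r ^ 2) / (4 * t) := by
    rw [mul_pow, inv_pow, Real.sq_sqrt ht.le]; field_simp
  rw [e] at this
  have e2 : t⁻¹ = (Real.sqrt t)⁻¹ ^ 2 := by rw [inv_pow, Real.sq_sqrt ht.le]
  rw [rpow_aux t ht, le_div_iff₀ (by positivity), div_eq_mul_inv _ t, e2]
  linarith [show (Real.sqrt t)⁻¹ ^ 3 * Real.exp (-(r ^ 2) / (4 * t)) * (Real.sqrt t)⁻¹ ^ 2 * r ^ 5 = (r * (Real.sqrt t)⁻¹) ^ 5 * Real.exp (-(r ^ 2) / (4 * t)) by ring]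

lemma cosh_le_two_sinh (r : ℝ) (hr : 1 ≤ r) : Real.cosh r ≤ 2 * Real.sinh r := by
  rw [Real.cosh_eq, Real.sinh_eq]
  have h1 := Real.add_one_le_exp r
  have h2 : Real.exp (-r) * Real.exp r = 1 := by rw [← Real.exp_add]; simp
  have h3 := Real.exp_pos (-r)
  nlinarith

lemma psiH_nonneg (t r : ℝ) (ht : 0 < t) (hr : 0 < r) : 0 ≤ psiH t r := by
  have := Real.sinh_pos_iff.2 hr
  unfold psiH; positivity

lemma psiH_le (t r : ℝ) (ht : 0 < t) (hr : 0 < r) : psiH t r ≤ 400 / (r ^ 2 * Real.sinh r) := by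
  have hs := Real.sinh_pos_iff.2 hr
  have h := gauss3 t r ht hr
  unfold psiH
  calc _ = r / Real.sinh r * (t ^ (-(3 : ℝ)/2) * Real.exp (-(r ^ 2) / (4 * t))) := by ring
    _ ≤ r / Real.sinh r * (400 / r ^ 3) := by gcongr
    _ = _ := by field_simp

lemma psiH_deriv (t r : ℝ) (ht : 0 < t) (hr : 1 ≤ r) :
    ∃ d, HasDerivAt (psiH t) d r ∧ |d| ≤ 1000 / (r ^ 2 * Real.sinh r) := by
  have hr0 : 0 < r := by linarith
  have hs := Real.sinh_pos_iff.2 hr0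
  have hc := cosh_le_two_sinh r hr
  have hsc := Real.sinh_lt_cosh r
  have h1 : HasDerivAt (fun r : ℝ => r / Real.sinh r) ((1 * Real.sinh r - r * Real.cosh r) / Real.sinh r ^ 2) r :=
    (hasDerivAt_id r).div (Real.hasDerivAt_sinh r) hs.ne'
  have h2 : HasDerivAt (fun r : ℝ => Real.exp (-(r ^ 2) / (4 * t))) (Real.exp (-(r ^ 2) / (4 * t)) * (-(2 * r) / (4 * t))) r := by
    have := (((hasDerivAt_pow 2 r).neg).div_const (4 * t)).exp
    simpa using this
  refine ⟨_, (h1.mul_const (t ^ (-(3 : ℝ)/2))).mul h2, ?_⟩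
  have g3 := gauss3 t r ht hr0
  have g5 := gauss5 t r ht hr0
  have hT : 0 < t ^ (-(3 : ℝ)/2) := by positivity
  set T := t ^ (-(3 : ℝ)/2)
  have hE := Real.exp_pos (-(r ^ 2) / (4 * t))
  set E := Real.exp (-(r ^ 2) / (4 * t))
  have e : (1 * Real.sinh r - r * Real.cosh r) / Real.sinh r ^ 2 * T * E + r / Real.sinh r * T * (E * (-(2 * r) / (4 * t)))
     = (1 * Real.sinh r - r * Real.cosh r) / Real.sinh r ^ 2 * (T * E) + -(r ^ 2 / (2 * Real.sinh r) * (T * E / t)) := by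
    field_simp; ring
  rw [e]
  have hA : |(1 * Real.sinh r - r * Real.cosh r) / Real.sinh r ^ 2| ≤ 2 * r / Real.sinh r := by
    rw [abs_div, abs_of_pos (show 0 < Real.sinh r ^ 2 by positivity), div_le_div_iff₀ (by positivity) hs]
    have : |1 * Real.sinh r - r * Real.cosh r| ≤ 2 * r * Real.sinh r := by
      rw [abs_le]; constructor <;> nlinarith
    nlinarith
  have hB : |-(r ^ 2 / (2 * Real.sinh r) * (T * E / t))| ≤ r ^ 2 / (2 * Real.sinh r) * (400 / r ^ 5) := by
    rw [abs_neg, abs_of_nonneg (by positivity)]; gcongr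
  have hC : |(1 * Real.sinh r - r * Real.cosh r) / Real.sinh r ^ 2 * (T * E)| ≤ 2 * r / Real.sinh r * (400 / r ^ 3) := by
    rw [abs_mul, abs_of_pos (show 0 < T * E by positivity)]; gcongr
  refine (abs_add_le _ _).trans ((add_le_add hC hB).trans ?_)
  have : r ^ 2 / (2 * Real.sinh r) * (400 / r ^ 5) ≤ 200 / (r ^ 2 * Real.sinh r) := by
    rw [div_mul_div_comm, div_le_div_iff₀ (by positivity) (by positivity)]
    have : r ^ 4 ≤ r ^ 5 := pow_le_pow_right₀ hr (by norm_num)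
    nlinarith
  have e2 : 2 * r / Real.sinh r * (400 / r ^ 3) = 800 / (r ^ 2 * Real.sinh r) := by field_simp; norm_num
  have e3 : 1000 / (r ^ 2 * Real.sinh r) = 800 / (r ^ 2 * Real.sinh r) + 200 / (r ^ 2 * Real.sinh r) := by ring
  linarith

lemma psiH_diff (t m r0 r1 : ℝ) (ht : 0 < t) (hm : 1 ≤ m) (h0 : m ≤ r0) (h1 : m ≤ r1) :
    |psiH t r1 - psiH t r0| ≤ 1000 / (m ^ 2 * Real.sinh m ^ 2) * |Real.cosh r1 - Real.cosh r0| := by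
  wlog h : r0 ≤ r1 generalizing r0 r1
  · rw [abs_sub_comm, abs_sub_comm (Real.cosh r1)]
    exact this r1 r0 h1 h0 (by linarith)
  rcases h.eq_or_lt with rfl | h
  · simp
  have hd : ∀ r, 1 ≤ r → HasDerivAt (psiH t) (deriv (psiH t) r) r := fun r hr => by
    obtain ⟨d, hd, _⟩ := psiH_deriv t r ht hr
    exact hd.differentiableAt.hasDerivAt
  obtain ⟨c, hc, e⟩ := exists_ratio_hasDerivAt_eq_ratio_slope (psiH t) (deriv (psiH t)) h
    (fun r hr => (hd r (by linarith [hr.1])).continuousAt.continuousWithinAt)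
    (fun r hr => hd r (by linarith [hr.1])) Real.cosh Real.sinh
    (Real.continuous_cosh.continuousOn) (fun r _ => Real.hasDerivAt_cosh r)
  have hc1 : m ≤ c := by linarith [hc.1]
  obtain ⟨d, hd1, hd2⟩ := psiH_deriv t c ht (by linarith)
  rw [hd1.deriv] at e
  have hsm : 0 < Real.sinh m := Real.sinh_pos_iff.2 (by linarith)
  have hsmc : Real.sinh m ≤ Real.sinh c := Real.sinh_le_sinh.2 hc1
  have hsc : 0 < Real.sinh c := by linarith
  have e' : psiH t r1 - psiH t r0 = (Real.cosh r1 - Real.cosh r0) * (d / Real.sinh c) := by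
    field_simp; linarith
  rw [e', abs_mul, mul_comm]
  gcongr
  rw [abs_div, abs_of_pos hsc]
  calc |d| / Real.sinh c ≤ 1000 / (c ^ 2 * Real.sinh c) / Real.sinh c := by gcongr
    _ = 1000 / (c ^ 2 * Real.sinh c ^ 2) := by field_simp
    _ ≤ _ := by gcongr

lemma far_r (L r s : ℝ) (hL : 10 ≤ Real.log L) (hq : 10 * Real.log L ≤ r) (hL0 : 0 < L)
    (hs0 : 0 ≤ s) (h : Real.cosh r ≤ 150 * L ^ 2 * Real.cosh s) : r / 2 ≤ s := by
  have h1 : Real.exp r ≤ 2 * Real.cosh r := by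
    rw [Real.cosh_eq]; linarith [Real.exp_pos (-r)]
  have h2 : Real.cosh s ≤ Real.exp s := by
    rw [Real.cosh_eq]; linarith [Real.exp_le_exp.2 (show -s ≤ s by linarith)]
  have h3 : Real.exp r ≤ 300 * L ^ 2 * Real.exp s := by nlinarith [sq_nonneg L]
  have h4 : (300 : ℝ) ≤ Real.exp 6 := by
    have : Real.exp 6 = Real.exp 1 ^ 6 := by rw [← Real.exp_nat_mul]; norm_num
    rw [this]
    have h : (2.7 : ℝ) ≤ Real.exp 1 := by linarith [Real.exp_one_gt_d9]
    calc (300 : ℝ) ≤ 2.7 ^ 6 := by norm_num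
      _ ≤ _ := by gcongr
  have h5 : L ^ 2 = Real.exp (2 * Real.log L) := by
    rw [two_mul, Real.exp_add, Real.exp_log hL0]; ring
  have h6 : Real.exp r ≤ Real.exp (6 + 2 * Real.log L + s) := by
    rw [Real.exp_add, Real.exp_add, ← h5]
    refine h3.trans ?_
    gcongr
  have := Real.exp_le_exp.1 h6
  linarith

lemma D_bound (L a x1 x2 z1 z2 w : ℝ) (hL : 20 ≤ L) (h1 : |z1| ≤ L + 1) (h2 : |z2| ≤ 1) (hw : 1/3 ≤ w) :
    a ^ 2 + 1 + x1 ^ 2 + x2 ^ 2 ≤ 2 * (a ^ 2 + w ^ 2 + (x1 - z1) ^ 2 + (x2 - z2) ^ 2) + 5 * L ^ 2 := by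
  have := sq_le_sq' (by linarith [(abs_le.1 h1).1]) (abs_le.1 h1).2
  have := sq_le_sq' (by linarith [(abs_le.1 h2).1]) (abs_le.1 h2).2
  nlinarith [sq_nonneg (x1 - 2 * z1), sq_nonneg (x2 - 2 * z2), sq_nonneg a, sq_nonneg w]

lemma one_side (L a x1 x2 z1 z2 w r s : ℝ) (ha : 0 < a) (hL : 10 ≤ Real.log L) (hL20 : 20 ≤ L)
    (h1 : |z1| ≤ L + 1) (h2 : |z2| ≤ 1) (hw : 1/3 ≤ w) (hw3 : w ≤ 3)
    (hr : Real.cosh r = (a ^ 2 + 1 + x1 ^ 2 + x2 ^ 2) / (2 * a))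
    (hs : Real.cosh s = (a ^ 2 + w ^ 2 + (x1 - z1) ^ 2 + (x2 - z2) ^ 2) / (2 * a * w))
    (hs0 : 0 ≤ s) (hq : 10 * Real.log L ≤ r) :
    r / 2 ≤ s ∧ 1 ≤ 12 * a * Real.sinh s ∧
     (10 * L ^ 2 ≤ a ^ 2 + 1 + x1 ^ 2 + x2 ^ 2 → Real.sinh r ≤ 24 * Real.sinh s) := by
  have hD := D_bound L a x1 x2 z1 z2 w hL20 h1 h2 hw
  have hw0 : 0 < w := by linarith
  have hDs : w ^ 2 ≤ a ^ 2 + w ^ 2 + (x1 - z1) ^ 2 + (x2 - z2) ^ 2 := by nlinarith [sq_nonneg a, sq_nonneg (x1 - z1), sq_nonneg (x2 - z2)]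
  set D := a ^ 2 + 1 + x1 ^ 2 + x2 ^ 2
  set S := a ^ 2 + w ^ 2 + (x1 - z1) ^ 2 + (x2 - z2) ^ 2
  have hr' : D = Real.cosh r * (2 * a) := by rw [hr]; field_simp
  have hs' : S = Real.cosh s * (2 * a * w) := by rw [hs]; field_simp
  have hS9 : 1 / 9 ≤ S := by nlinarith
  have hcs := Real.cosh_pos s
  have hSle : S ≤ Real.cosh s * (6 * a) := by
    rw [hs']
    have : 0 < Real.cosh s * a := by positivity
    nlinarith
  have hrs : r / 2 ≤ s := by
    refine far_r L r s hL hq (by linarith) hs0 ?_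
    have h3 : D ≤ 150 * L ^ 2 * Real.cosh s * (2 * a) := by
      have : D ≤ 45 * L ^ 2 * S + 2 * S := by nlinarith [sq_nonneg L]
      have hS0 : 0 ≤ S := by linarith
      have h2 : 45 * L ^ 2 * S + 2 * S ≤ 50 * L ^ 2 * S := by
        have h7 : (2:ℝ) ≤ 5 * L ^ 2 := by nlinarith
        have := mul_le_mul_of_nonneg_right h7 hS0
        linarith
      have h3 : 50 * L ^ 2 * S ≤ 50 * L ^ 2 * (Real.cosh s * (6 * a)) := by gcongr
      linarith
    rw [hr'] at h3
    exact le_of_mul_le_mul_right h3 (by positivity)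
  have h2s := cosh_le_two_sinh s (by linarith)
  refine ⟨hrs, ?_, ?_⟩
  · have : w * w ≤ (Real.cosh s * (2 * a)) * w := by rw [hs'] at hDs; nlinarith
    have := le_of_mul_le_mul_right this hw0
    nlinarith
  · intro h10
    have h4 : D ≤ 4 * S := by linarith
    have h5 : Real.cosh r * (2 * a) ≤ 12 * Real.cosh s * (2 * a) := by rw [← hr']; linarith
    have := le_of_mul_le_mul_right h5 (by positivity)
    linarith [Real.sinh_lt_cosh r]

lemma pointwise (L a x1 x2 z1 z2 w r r0 r1 t : ℝ) (ht : 0 < t) (ha : 0 < a) (hL : 10 ≤ Real.log L)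
    (hL20 : 20 ≤ L)
    (h1 : |z1| ≤ 1) (h2 : |z2| ≤ 1) (hw : 1/3 ≤ w) (hw3 : w ≤ 3)
    (hr : Real.cosh r = (a ^ 2 + 1 + x1 ^ 2 + x2 ^ 2) / (2 * a))
    (hr0 : Real.cosh r0 = (a ^ 2 + w ^ 2 + (x1 - z1) ^ 2 + (x2 - z2) ^ 2) / (2 * a * w))
    (hr1 : Real.cosh r1 = (a ^ 2 + w ^ 2 + (x1 - (z1 + L)) ^ 2 + (x2 - z2) ^ 2) / (2 * a * w))
    (hr00 : 0 ≤ r0) (hr10 : 0 ≤ r1) (hq : 10 * Real.log L ≤ r) :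
    0 < r0 ∧ 0 < r1 ∧ |psiH t r1 - psiH t r0| ≤ 15000000 * (L ^ 3 / a * r⁻¹ ^ 2 * (Real.sinh r)⁻¹ ^ 2 *
      (L + Real.sqrt (x1 ^ 2 + x2 ^ 2))) := by
  obtain ⟨b0, c0, d0⟩ := one_side L a x1 x2 z1 z2 w r r0 ha hL hL20 (by linarith) h2 hw hw3 hr hr0 hr00 hq
  obtain ⟨b1, c1, d1⟩ := one_side L a x1 x2 (z1 + L) z2 w r r1 ha hL hL20
    (by rw [abs_le] at h1 ⊢; constructor <;> linarith) h2 hw hw3 hr hr1 hr10 hq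
  have hr100 : 100 ≤ r := by linarith
  have hN : |x1| ≤ Real.sqrt (x1 ^ 2 + x2 ^ 2) := Real.abs_le_sqrt (by nlinarith)
  set N := Real.sqrt (x1 ^ 2 + x2 ^ 2)
  have hN0 : 0 ≤ N := Real.sqrt_nonneg _
  have hsr : 0 < Real.sinh r := Real.sinh_pos_iff.2 (by linarith)
  have hs0 : 0 < Real.sinh r0 := Real.sinh_pos_iff.2 (by linarith)
  have hs1 : 0 < Real.sinh r1 := Real.sinh_pos_iff.2 (by linarith)
  have hL0 : 0 < L := by linarith
  refine ⟨by linarith, by linarith, ?_⟩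
  rcases le_total (10 * L ^ 2) (a ^ 2 + 1 + x1 ^ 2 + x2 ^ 2) with hD | hD
  · have hm0 : r / 2 ≤ min r0 r1 := le_min b0 b1
    have hsm : Real.sinh r ≤ 24 * Real.sinh (min r0 r1) := by
      rcases min_choice r0 r1 with h | h <;> rw [h]
      · exact d0 hD
      · exact d1 hD
    have hd := psiH_diff t (min r0 r1) r0 r1 ht (by linarith) (min_le_left _ _) (min_le_right _ _)
    set m := min r0 r1
    have hc : |Real.cosh r1 - Real.cosh r0| ≤ 6 * (L * (L + N) / a) := by
      have e : Real.cosh r1 - Real.cosh r0 = L * (L - 2 * (x1 - z1)) / (2 * a * w) := by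
        rw [hr0, hr1]; field_simp; ring
      rw [e, abs_div, abs_mul, abs_of_pos hL0, abs_of_pos (show 0 < 2 * a * w by positivity)]
      have h3 : |L - 2 * (x1 - z1)| ≤ 4 * (L + N) := by
        rw [abs_le] at hN h1 ⊢; constructor <;> linarith
      rw [div_le_iff₀ (by positivity)]
      calc L * |L - 2 * (x1 - z1)| ≤ L * (4 * (L + N)) := by gcongr
        _ ≤ L * (L + N) * (12 * w) := by
          have : 0 ≤ L * (L + N) := by positivity
          nlinarith
        _ = _ := by field_simp; ring
    have h1000 : 1000 / (m ^ 2 * Real.sinh m ^ 2) ≤ 1000 / ((r / 2) ^ 2 * (Real.sinh r / 24) ^ 2) := by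
      gcongr
      linarith
    refine hd.trans ((mul_le_mul h1000 hc (abs_nonneg _) (by positivity)).trans ?_)
    have e : 1000 / ((r / 2) ^ 2 * (Real.sinh r / 24) ^ 2) * (6 * (L * (L + N) / a)) =
        13824000 * (L / a * r⁻¹ ^ 2 * (Real.sinh r)⁻¹ ^ 2 * (L + N)) := by
      field_simp; ring
    rw [e]
    gcongr
    · norm_num
    · exact le_self_pow₀ (by linarith) (by norm_num)
  · have hb : ∀ s, r / 2 ≤ s → 1 ≤ 12 * a * Real.sinh s → 0 < Real.sinh s →
        0 ≤ psiH t s ∧ psiH t s ≤ 19200 * a / r ^ 2 := by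
      intro s hs1 hs2 hs3
      refine ⟨psiH_nonneg t s ht (by linarith), (psiH_le t s ht (by linarith)).trans ?_⟩
      calc 400 / (s ^ 2 * Real.sinh s) ≤ 400 / ((r / 2) ^ 2 * (1 / (12 * a))) := by
            gcongr
            rw [div_le_iff₀ (by positivity)]; linarith
        _ = _ := by field_simp; ring
    obtain ⟨e0, f0⟩ := hb r0 b0 c0 hs0
    obtain ⟨e1, f1⟩ := hb r1 b1 c1 hs1
    have hsle : Real.sinh r ≤ 5 * L ^ 2 / a := by
      refine (Real.sinh_lt_cosh r).le.trans ?_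
      rw [hr, div_le_div_iff₀ (by positivity) ha]
      nlinarith
    have hlow : a / (25 * r ^ 2) ≤ L ^ 3 / a * r⁻¹ ^ 2 * (Real.sinh r)⁻¹ ^ 2 * (L + N) := by
      calc a / (25 * r ^ 2) = L ^ 3 / a * r⁻¹ ^ 2 * (5 * L ^ 2 / a)⁻¹ ^ 2 * (L + 0) := by
            field_simp; ring
        _ ≤ _ := by gcongr
    have : |psiH t r1 - psiH t r0| ≤ 19200 * a / r ^ 2 := by
      rw [abs_le]; constructor <;> linarith
    refine this.trans ?_
    have : 19200 * a / r ^ 2 = 480000 * (a / (25 * r ^ 2)) := by field_simp; norm_num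
    rw [this]
    have : 0 ≤ a / (25 * r ^ 2) := by positivity
    linarith

lemma one_le_coshArg (y : G) (hb : 0 < y.2.2) : 1 ≤ coshArg y := by
  unfold coshArg
  have h : 0 ≤ y.2.2⁻¹ * (y.1 ^ 2 + y.2.1 ^ 2) := by positivity
  have h2 : 2 ≤ y.2.2 + y.2.2⁻¹ := by
    have : y.2.2 * y.2.2⁻¹ = 1 := mul_inv_cancel₀ hb.ne'
    have : 0 < y.2.2⁻¹ := by positivity
    nlinarith [sq_nonneg (y.2.2 - y.2.2⁻¹)]
  linarith

lemma cosh_rG (y : G) (hb : 0 < y.2.2) : Real.cosh (rG y) = coshArg y :=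
  Real.cosh_arcosh (one_le_coshArg y hb)

lemma rG_nonneg (y : G) (hb : 0 < y.2.2) : 0 ≤ rG y :=
  Real.arcosh_nonneg (one_le_coshArg y hb)

lemma measurable_rG : Measurable rG := by
  unfold rG coshArg
  fun_prop

lemma measurable_heatK (t : ℝ) : Measurable (heatK t) := by
  have h := measurable_rG
  have h1 : Measurable (fun x : G => if rG x = 0 then (1:ℝ) else rG x / Real.sinh (rG x)) := by
    refine Measurable.ite (h (measurableSet_singleton 0)) measurable_const ?_
    exact h.div (Real.measurable_sinh.comp h)
  unfold heatK deltaG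
  fun_prop

lemma heatK_bound (t : ℝ) (ht : 0 < t) (y : G) (hb : 0 < y.2.2) :
    |heatK t y| ≤ (8 * Real.pi ^ ((3 : ℝ)/2))⁻¹ * y.2.2⁻¹ * t ^ (-(3 : ℝ)/2) := by
  have h0 := rG_nonneg y hb
  unfold heatK deltaG
  have hs : Real.sqrt ((y.2.2 ^ 2)⁻¹) = y.2.2⁻¹ := by
    rw [← inv_pow, Real.sqrt_sq (by positivity)]
  rw [hs]
  have h1 : 0 ≤ (if rG y = 0 then (1:ℝ) else rG y / Real.sinh (rG y)) ∧
      (if rG y = 0 then (1:ℝ) else rG y / Real.sinh (rG y)) ≤ 1 := by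
    split_ifs with h
    · simp
    · have h2 : 0 < rG y := lt_of_le_of_ne h0 (Ne.symm h)
      have h3 := Real.sinh_pos_iff.2 h2
      refine ⟨by positivity, ?_⟩
      rw [div_le_one h3]
      exact Real.self_le_sinh_iff.2 h0
  have h2 : Real.exp (-(rG y ^ 2) / (4 * t)) ≤ 1 := by
    rw [Real.exp_le_one_iff]
    exact div_nonpos_of_nonpos_of_nonneg (by nlinarith) (by positivity)
  set q := (if rG y = 0 then (1:ℝ) else rG y / Real.sinh (rG y))
  obtain ⟨hq0, hq1⟩ := h1
  rw [abs_of_nonneg (by positivity)]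
  calc _ ≤ (8 * Real.pi ^ ((3 : ℝ)/2))⁻¹ * y.2.2⁻¹ * 1 * t ^ (-(3 : ℝ)/2) * 1 := by gcongr
    _ = _ := by ring

/-- Shear in the first two variables. -/
def shearG (c1 c2 : ℝ) (y : G) : G := (y.1 + c1 * y.2.2, y.2.1 + c2 * y.2.2, y.2.2)

lemma measurable_shearG (c1 c2 : ℝ) : Measurable (shearG c1 c2) := by
  unfold shearG; fun_prop

lemma shear_aux {β : Type*} [MeasureSpace β] [SFinite (volume : Measure β)] (g : β → ℝ) (hg : Measurable g) :
    MeasurePreserving (fun y : ℝ × β => (y.1 + g y.2, y.2)) volume volume := by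
  have h := MeasurePreserving.skew_product (μa := (volume : Measure β)) (μc := (volume : Measure ℝ))
    (μd := (volume : Measure ℝ)) (MeasurePreserving.id (volume : Measure β)) (g := fun b s => s + g b)
    (by unfold Function.uncurry; fun_prop)
    (Filter.Eventually.of_forall fun b => (measurePreserving_add_right volume (g b)).map_eq)
  exact (Measure.measurePreserving_swap.comp h).comp Measure.measurePreserving_swap

lemma shear_vol (c1 c2 : ℝ) : MeasurePreserving (shearG c1 c2) volume volume := by
  have h1 := shear_aux (β := ℝ × ℝ) (fun b => c1 * b.2) (by fun_prop)
  have h2 := shear_aux (β := ℝ) (fun b => c2 * b) (by fun_prop)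
  have h3 := (MeasurePreserving.id (volume : Measure ℝ)).prod h2
  exact h3.comp h1

lemma shear_rho (c1 c2 : ℝ) : MeasurePreserving (shearG c1 c2) ρG ρG := by
  refine ⟨measurable_shearG c1 c2, ?_⟩
  have hd : Measurable (fun x : G => ENNReal.ofReal (if 0 < x.2.2 then x.2.2⁻¹ else 0)) := by
    refine ENNReal.measurable_ofReal.comp (Measurable.ite ?_ (by fun_prop) measurable_const)
    exact measurableSet_lt measurable_const (by fun_prop)
  ext s hs
  rw [Measure.map_apply (measurable_shearG c1 c2) hs]
  unfold ρG
  rw [withDensity_apply _ (measurable_shearG c1 c2 hs), withDensity_apply _ hs,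
    ← (shear_vol c1 c2).setLIntegral_comp_preimage hs hd]
  rfl

/-- The domain of integration. -/
def SG (x : G) : Set G := {y | 0 < y.2.2 ∧ gMul x (gInv y) ∈ R0set}

lemma measurable_SG (x : G) : MeasurableSet (SG x) := by
  have hm : Measurable (fun y : G => gMul x (gInv y)) := by unfold gMul gInv; fun_prop
  have hR : MeasurableSet R0set :=
    measurableSet_Icc.prod (measurableSet_Icc.prod measurableSet_Icc)
  exact (measurableSet_lt (g := fun y : G => y.2.2) measurable_const (by fun_prop)).inter (hm hR)

lemma exp_bounds : 1/3 ≤ Real.exp (-1) ∧ Real.exp 1 ≤ 3 := by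
  have h := Real.exp_one_lt_d9
  refine ⟨?_, by linarith⟩
  rw [Real.exp_neg, ← one_div]
  exact one_div_le_one_div_of_le (Real.exp_pos 1) (by linarith)

/-- Parametrisation of `SG x`. -/
lemma SG_param (x y : G) (ha : 0 < x.2.2) (hy : y ∈ SG x) :
    ∃ z1 z2 w : ℝ, |z1| ≤ 1 ∧ |z2| ≤ 1 ∧ 1/3 ≤ w ∧ w ≤ 3 ∧
      y = ((x.1 - z1) / w, (x.2.1 - z2) / w, x.2.2 / w) := by
  obtain ⟨hb, h1, h2, h3⟩ := hy
  simp only [gMul, gInv, mem_Icc] at h1 h2 h3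
  have := exp_bounds
  refine ⟨_, _, x.2.2 * (1 / y.2.2), abs_le.2 h1, abs_le.2 h2, by linarith, by linarith, ?_⟩
  ext
  · simp; field_simp
    try ring
  · simp; field_simp
    try ring
  · simp; field_simp

lemma rho_SG (x : G) (ha : 0 < x.2.2) : ρG (SG x) ≤ ENNReal.ofReal 288 := by
  set a := x.2.2 with hadef
  set B : Set G := Icc (-3) 3 ×ˢ (Icc (-3) 3 ×ˢ Icc (a / 3) (3 * a)) with hB
  have hBm : MeasurableSet B := measurableSet_Icc.prod (measurableSet_Icc.prod measurableSet_Icc)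
  have hsub : SG x ⊆ shearG (-x.1 / a) (-x.2.1 / a) ⁻¹' B := by
    intro y hy
    obtain ⟨z1, z2, w, h1, h2, h3, h4, rfl⟩ := SG_param x y ha hy
    have hw : 0 < w := by linarith
    simp only [shearG, mem_preimage, hB, mem_prod, mem_Icc]
    rw [← hadef]
    have key : ∀ u z : ℝ, |z| ≤ 1 → -3 ≤ (u - z) / w + -u / a * (a / w) ∧ (u - z) / w + -u / a * (a / w) ≤ 3 := by
      intro u z hz
      have e : (u - z) / w + -u / a * (a / w) = -z / w := by field_simp; ring
      rw [e, le_div_iff₀ hw, div_le_iff₀ hw]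
      rw [abs_le] at hz
      constructor <;> linarith
    refine ⟨key _ _ h1, key _ _ h2, ?_, ?_⟩
    · exact div_le_div_of_nonneg_left ha.le hw h4
    · rw [div_le_iff₀ hw]; nlinarith
  refine (measure_mono hsub).trans ?_
  rw [(shear_rho _ _).measure_preimage hBm.nullMeasurableSet]
  unfold ρG
  rw [withDensity_apply _ hBm]
  have hle : ∫⁻ y in B, ENNReal.ofReal (if 0 < y.2.2 then y.2.2⁻¹ else 0) ≤ ∫⁻ y in B, ENNReal.ofReal (3 / a) := by
    refine setLIntegral_mono measurable_const ?_
    intro y hy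
    have h := hy.2.2.1
    have hb : 0 < y.2.2 := lt_of_lt_of_le (by positivity) h
    refine ENNReal.ofReal_le_ofReal ?_
    rw [if_pos hb, inv_le_comm₀ hb (by positivity), inv_div]
    exact h
  refine hle.trans ?_
  rw [setLIntegral_const, hB, Measure.volume_eq_prod, Measure.prod_prod, Measure.volume_eq_prod, Measure.prod_prod]
  simp only [Real.volume_Icc]
  rw [← ENNReal.ofReal_mul (by norm_num), ← ENNReal.ofReal_mul (by norm_num), ← ENNReal.ofReal_mul (by positivity)]
  refine ENNReal.ofReal_le_ofReal (le_of_eq ?_)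
  field_simp
  norm_num

lemma heatK_eq (t : ℝ) (y : G) (hb : 0 < y.2.2) (hr : 0 < rG y) :
    heatK t y = (8 * Real.pi ^ ((3 : ℝ)/2))⁻¹ * y.2.2⁻¹ * psiH t (rG y) := by
  unfold heatK deltaG psiH
  have hs : Real.sqrt ((y.2.2 ^ 2)⁻¹) = y.2.2⁻¹ := by
    rw [← inv_pow, Real.sqrt_sq (by positivity)]
  rw [hs, if_neg hr.ne']
  ring

lemma diff_bound (L : ℝ) (x : G) (t : ℝ) (ht : 0 < t) (ha : 0 < x.2.2) (hL : 10 ≤ Real.log L)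
    (hL20 : 20 ≤ L) (hq : 10 * Real.log L ≤ rG x) (y : G) (hy : y ∈ SG x) :
    |heatK t (shearG (-(L / x.2.2)) 0 y) - heatK t y| ≤ 45000000 * (L ^ 3 / x.2.2 ^ 2) * (rG x)⁻¹ ^ 2 * (Real.sinh (rG x))⁻¹ ^ 2 *
            (L + normG x) := by
  have hb : 0 < y.2.2 := hy.1
  have hb' : 0 < (shearG (-(L / x.2.2)) 0 y).2.2 := hb
  obtain ⟨z1, z2, w, h1, h2, h3, h4, hyw⟩ := SG_param x y ha hy
  have hw : 0 < w := by linarith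
  have key := pointwise L x.2.2 x.1 x.2.1 z1 z2 w (rG x) (rG y) (rG (shearG (-(L / x.2.2)) 0 y)) t ht ha
    hL hL20 h1 h2 h3 h4
    (by rw [cosh_rG x ha, coshArg]; field_simp; ring)
    (by rw [cosh_rG y hb, coshArg, hyw]; simp only; field_simp; ring)
    (by rw [cosh_rG _ hb', coshArg, hyw]; simp only [shearG]; field_simp; ring)
    (rG_nonneg y hb) (rG_nonneg _ hb') hq
  obtain ⟨k0, k1, k2⟩ := key
  rw [heatK_eq t y hb k0, heatK_eq t _ hb' k1]
  have e : (shearG (-(L / x.2.2)) 0 y).2.2 = y.2.2 := rfl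
  rw [e, ← mul_sub, abs_mul]
  have hc : |(8 * Real.pi ^ ((3 : ℝ)/2))⁻¹ * y.2.2⁻¹| ≤ 3 / x.2.2 := by
    rw [abs_of_nonneg (by positivity)]
    have hpi : (1:ℝ) ≤ Real.pi ^ ((3 : ℝ)/2) := Real.one_le_rpow (by linarith [Real.pi_gt_three]) (by norm_num)
    have h5 : (8 * Real.pi ^ ((3 : ℝ)/2))⁻¹ ≤ 1 := inv_le_one_of_one_le₀ (by linarith)
    have h6 : y.2.2⁻¹ ≤ 3 / x.2.2 := by
      rw [hyw]; simp only; rw [inv_div]; gcongr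
    calc _ ≤ 1 * (3 / x.2.2) := by gcongr
      _ = _ := one_mul _
  refine (mul_le_mul hc k2 (abs_nonneg _) (by positivity)).trans (le_of_eq ?_)
  unfold normG
  field_simp
  norm_num

lemma fL_eq (L : ℝ) (x y : G) (ha : 0 < x.2.2) (p : G → ℝ) :
    fL L (gMul x (gInv y)) * p y =
      (SG x).indicator (fun y => p (shearG (-(L / x.2.2)) 0 y)) (shearG (L / x.2.2) 0 y)
        - (SG x).indicator p y := by
  have hU : shearG (-(L / x.2.2)) 0 (shearG (L / x.2.2) 0 y) = y := by
    simp only [shearG]; ext <;> simp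
  have hpos : ∀ y : G, Real.exp (-1) ≤ (gMul x (gInv y)).2.2 → 0 < y.2.2 := by
    intro y h
    simp only [gMul, gInv] at h
    have h2 : 0 < x.2.2 * (1 / y.2.2) := lt_of_lt_of_le (Real.exp_pos _) h
    have := pos_of_mul_pos_right h2 ha.le
    exact one_div_pos.1 this
  have hA : gMul x (gInv y) ∈ R0set ↔ y ∈ SG x :=
    ⟨fun h => ⟨hpos y h.2.2.1, h⟩, fun h => h.2⟩
  have hB : gMul x (gInv y) ∈ RLset L ↔ shearG (L / x.2.2) 0 y ∈ SG x := by
    by_cases hb : 0 < y.2.2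
    · have e1 : (gMul x (gInv (shearG (L / x.2.2) 0 y))).1 = (gMul x (gInv y)).1 - L := by
        simp only [gMul, gInv, shearG]; field_simp; ring
      have e2 : (gMul x (gInv (shearG (L / x.2.2) 0 y))).2 = (gMul x (gInv y)).2 := by
        simp only [gMul, gInv, shearG]; simp
      have hb' : 0 < (shearG (L / x.2.2) 0 y).2.2 := hb
      simp only [SG, mem_ofPred_eq, hb', true_and, RLset, R0set, mem_prod, e1, e2, mem_Icc]
      constructor
      · rintro ⟨⟨h1, h2⟩, h3⟩; exact ⟨⟨by linarith, by linarith⟩, h3⟩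
      · rintro ⟨⟨h1, h2⟩, h3⟩; exact ⟨⟨by linarith, by linarith⟩, h3⟩
    · constructor
      · intro h; exact absurd (hpos y h.2.2.1) hb
      · intro h; exact absurd h.1 hb
  by_cases p1 : y ∈ SG x <;> by_cases p2 : shearG (L / x.2.2) 0 y ∈ SG x <;>
    simp [fL, Set.indicator, hA, hB, p1, p2, hU]

lemma integrableOn_aux (c t : ℝ) (ht : 0 < t) (x : G) (ha : 0 < x.2.2) :
    IntegrableOn (fun y => heatK t (shearG c 0 y)) (SG x) ρG := by
  refine Measure.integrableOn_of_bounded (M := (8 * Real.pi ^ ((3 : ℝ)/2))⁻¹ * (3 / x.2.2) * t ^ (-(3 : ℝ)/2))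
    ((rho_SG x ha).trans_lt ENNReal.ofReal_lt_top).ne
    ((measurable_heatK t).comp (measurable_shearG c 0)).aestronglyMeasurable ?_
  refine (ae_restrict_mem (measurable_SG x)).mono ?_
  intro y hy
  have hb : 0 < y.2.2 := hy.1
  obtain ⟨z1, z2, w, h1, h2, h3, h4, hyw⟩ := SG_param x y ha hy
  have hw : 0 < w := by linarith
  rw [Real.norm_eq_abs]
  refine (heatK_bound t ht _ (by exact hb)).trans ?_
  have e : (shearG c 0 y).2.2 = y.2.2 := rfl
  have h6 : y.2.2⁻¹ ≤ 3 / x.2.2 := by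
    rw [hyw]; simp only; rw [inv_div]; gcongr
  rw [e]
  gcongr

lemma mp_integral (T : G → G) (hT : MeasurePreserving T ρG ρG) (F : G → ℝ)
    (hF : AEStronglyMeasurable F ρG) : ∫ y, F (T y) ∂ρG = ∫ y, F y ∂ρG := by
  have hF' : AEStronglyMeasurable F (Measure.map T ρG) := by rw [hT.map_eq]; exact hF
  have := integral_map hT.measurable.aemeasurable hF'
  rw [hT.map_eq] at this
  exact this.symm

lemma mp_integrable (T : G → G) (hT : MeasurePreserving T ρG ρG) (F : G → ℝ)
    (hF : Integrable F ρG) : Integrable (fun y => F (T y)) ρG := by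
  have hF' : Integrable F (Measure.map T ρG) := by rw [hT.map_eq]; exact hF
  exact hF'.comp_measurable hT.measurable

lemma conv_eq_aux (p : G → ℝ) (L : ℝ) (x : G) (ha : 0 < x.2.2)
    (i1 : IntegrableOn (fun y => p (shearG (-(L / x.2.2)) 0 y)) (SG x) ρG)
    (i2 : IntegrableOn p (SG x) ρG) :
    ∫ y, fL L (gMul x (gInv y)) * p y ∂ρG =
      ∫ y in SG x, (p (shearG (-(L / x.2.2)) 0 y) - p y) ∂ρG := by
  have hT := shear_rho (L / x.2.2) 0
  set q : G → ℝ := fun y => p (shearG (-(L / x.2.2)) 0 y) with hq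
  have j1 : Integrable ((SG x).indicator q) ρG := (integrable_indicator_iff (measurable_SG x)).2 i1
  have j2 : Integrable ((SG x).indicator p) ρG := (integrable_indicator_iff (measurable_SG x)).2 i2
  have k1 : Integrable (fun y => (SG x).indicator q (shearG (L / x.2.2) 0 y)) ρG :=
    mp_integrable (shearG (L / x.2.2) 0) hT _ j1
  have hI := mp_integral (shearG (L / x.2.2) 0) hT _ j1.aestronglyMeasurable
  have s1 : ∫ y, fL L (gMul x (gInv y)) * p y ∂ρG =
      ∫ y, ((SG x).indicator q (shearG (L / x.2.2) 0 y) - (SG x).indicator p y) ∂ρG :=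
    congrArg (fun F : G → ℝ => ∫ y, F y ∂ρG) (funext fun y => fL_eq L x y ha p)
  have s2 := integral_sub k1 j2
  have s3 : ∫ y in SG x, (q y - p y) ∂ρG = ∫ y in SG x, q y ∂ρG - ∫ y in SG x, p y ∂ρG :=
    integral_sub i1 i2
  have s4 : ∫ y, (SG x).indicator q y ∂ρG = ∫ y in SG x, q y ∂ρG :=
    integral_indicator (measurable_SG x)
  have s5 : ∫ y, (SG x).indicator p y ∂ρG = ∫ y in SG x, p y ∂ρG :=
    integral_indicator (measurable_SG x)
  rw [s1, s2, hI, s4, s5]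
  exact s3.symm

lemma conv_eq (L t : ℝ) (ht : 0 < t) (x : G) (ha : 0 < x.2.2) :
    convHeat (fL L) t x = ∫ y in SG x, (heatK t (shearG (-(L / x.2.2)) 0 y) - heatK t y) ∂ρG := by
  have i1 := integrableOn_aux (-(L / x.2.2)) t ht x ha
  have e : (fun y => heatK t (shearG 0 0 y)) = heatK t := by
    funext y; simp [shearG]
  have i2 := integrableOn_aux 0 t ht x ha
  rw [e] at i2
  exact conv_eq_aux (heatK t) L x ha i1 i2

theorem fL_conv_heat_far_bound :
    ∀ α > (2 : ℝ), ∃ C > (0 : ℝ), ∃ L₀ > (2 : ℝ), ∀ L ≥ L₀, ∀ x : G, 0 < x.2.2 →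
      Real.log L ^ α ≤ rG x → ∀ t > (0 : ℝ),
        |convHeat (fL L) t x| ≤
          C * (L ^ 3 / x.2.2 ^ 2) * (rG x)⁻¹ ^ 2 * (Real.sinh (rG x))⁻¹ ^ 2 *
            (L + normG x) := by
  intro α hα
  refine ⟨288 * 45000000, by norm_num, Real.exp 10, ?_, ?_⟩
  · linarith [Real.add_one_le_exp (10:ℝ)]
  intro L hL x ha hr t ht
  have h5 : (36:ℝ) ≤ Real.exp 10 := by
    have h := Real.add_one_le_exp (5:ℝ)
    have : Real.exp 10 = Real.exp 5 * Real.exp 5 := by rw [← Real.exp_add]; norm_num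
    nlinarith
  have hL20 : 20 ≤ L := by linarith
  have hlog : 10 ≤ Real.log L := (Real.le_log_iff_exp_le (by linarith)).2 hL
  have hq : 10 * Real.log L ≤ rG x := by
    have h := Real.rpow_le_rpow_of_exponent_le (show 1 ≤ Real.log L by linarith) hα.le
    rw [Real.rpow_two] at h
    nlinarith
  rw [conv_eq L t ht x ha]
  have hfin := rho_SG x ha
  have h := norm_setIntegral_le_of_norm_le_const
    (f := fun y => heatK t (shearG (-(L / x.2.2)) 0 y) - heatK t y) (hfin.trans_lt ENNReal.ofReal_lt_top)
    (fun y hy => diff_bound L x t ht ha hlog hL20 hq y hy)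
  rw [Real.norm_eq_abs] at h
  refine h.trans ?_
  have hreal : ρG.real (SG x) ≤ 288 := ENNReal.toReal_le_of_le_ofReal (by norm_num) hfin
  have hn : 0 ≤ normG x := Real.sqrt_nonneg _
  refine (mul_le_mul_of_nonneg_left hreal (by positivity)).trans (le_of_eq ?_)
  ring
end
end

section
/- The function f defined by f(x₁,x₂,a) = 1/(x₁ (log x₁)^{3/2}) on {x₁ > 3, |x₂| < 1, e⁻¹ < a < e}, f = c₀ on R₀ = [−1,1]×[−1,1]×[e⁻¹,e], and f = 0 elsewhere (with c₀ chosen so that ∫_G f dρ = 0) belongs to L¹(ρ) but does not belong to the Hardy space H¹. -/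
open MeasureTheory Real Filter Set
open scoped ENNReal

noncomputable section

/-! ### Proof -/

/-- The measure `a⁻¹ da` on the half-line. -/
def muA : Measure ℝ :=
  (volume : Measure ℝ).withDensity fun a => ENNReal.ofReal (if 0 < a then a⁻¹ else 0)

/-- The measure `dx₂ a⁻¹ da`. -/
def nuA : Measure (ℝ × ℝ) := (volume : Measure ℝ).prod muA

theorem dens_meas : Measurable fun a : ℝ => ENNReal.ofReal (if 0 < a then a⁻¹ else 0) := by
  apply ENNReal.measurable_ofReal.comp
  exact Measurable.ite measurableSet_Ioi measurable_inv measurable_const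

instance : SFinite muA := by unfold muA; infer_instance

instance : SFinite nuA := by unfold nuA; infer_instance

theorem rhoG_eq : ρG = (volume : Measure ℝ).prod nuA := by
  unfold nuA muA ρG
  rw [prod_withDensity_right dens_meas, prod_withDensity_right (g := fun z : ℝ × ℝ => ENNReal.ofReal (if 0 < z.2 then z.2⁻¹ else 0))
      (dens_meas.comp measurable_snd)]
  rfl

/-- Truncated logarithm. -/
def hK (k s : ℝ) : ℝ := max (min (Real.log s) k) 0

theorem hK_meas (k : ℝ) : Measurable (hK k) := by
  unfold hK
  exact (Real.measurable_log.min measurable_const).max measurable_const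

theorem hK_nonneg (k s : ℝ) : 0 ≤ hK k s := le_max_right _ _

theorem hK_le {k : ℝ} (hk : 0 ≤ k) (s : ℝ) : hK k s ≤ k :=
  max_le (min_le_right _ _) hk

theorem hK_lip (k s t : ℝ) : |hK k s - hK k t| ≤ |Real.log s - Real.log t| := by
  unfold hK
  refine (abs_max_sub_max_le_abs _ _ _).trans ?_
  refine (abs_min_sub_min_le_max _ _ _ _).trans ?_
  simp

theorem log_int (M : ℝ) (hM : 0 < M) :
    ∫⁻ s in Icc (-M) M, ENNReal.ofReal (Real.log M - Real.log s) = ENNReal.ofReal (2 * M) := by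
  have hle : -M ≤ M := by linarith
  have hii : IntervalIntegrable (fun s => Real.log M - Real.log s) volume (-M) M :=
    intervalIntegrable_const.sub intervalIntegral.intervalIntegrable_log'
  have hI : Integrable (fun s => Real.log M - Real.log s) (volume.restrict (Icc (-M) M)) := by
    have := (intervalIntegrable_iff_integrableOn_Icc_of_le hle).1 hii
    exact this
  have hnn : 0 ≤ᵐ[volume.restrict (Icc (-M) M)] fun s => Real.log M - Real.log s := by
    have h0 : ∀ᵐ s : ℝ ∂(volume.restrict (Icc (-M) M)), s ≠ 0 :=
      ae_restrict_of_ae (by simp [ae_iff])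
    filter_upwards [h0, ae_restrict_mem measurableSet_Icc] with s hs0 hs
    have h1 : |s| ≤ M := abs_le.2 hs
    have h2 : Real.log |s| ≤ Real.log M := Real.log_le_log (abs_pos.2 hs0) h1
    rw [Real.log_abs] at h2
    simpa using h2
  rw [← ofReal_integral_eq_lintegral_ofReal hI hnn, integral_Icc_eq_integral_Ioc,
    ← intervalIntegral.integral_of_le hle,
    intervalIntegral.integral_sub intervalIntegrable_const
      intervalIntegral.intervalIntegrable_log', integral_log]
  congr 1
  simp
  ring

theorem osc (k α β : ℝ) (hab : α < β) :
    ∃ c, ∫⁻ s in Icc α β, ENNReal.ofReal |hK k s - c| ≤ 4 * volume (Icc α β) := by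
  set M := max |α| |β| with hMdef
  have hM : 0 < M := by
    by_contra h
    have h1 : |α| ≤ 0 := (le_max_left _ _).trans (not_lt.1 h)
    have h2 : |β| ≤ 0 := (le_max_right _ _).trans (not_lt.1 h)
    have h3 := abs_nonpos_iff.1 h1
    have h4 := abs_nonpos_iff.1 h2
    linarith
  have hsM : ∀ s ∈ Icc α β, |s| ≤ M := by
    intro s hs
    have h1 := (abs_le.1 (le_max_left |α| |β|)).1
    have h2 := (abs_le.1 (le_max_right |α| |β|)).2
    exact abs_le.2 ⟨h1.trans hs.1, hs.2.trans h2⟩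
  refine ⟨hK k M, ?_⟩
  have h0 : ∀ᵐ s : ℝ ∂(volume.restrict (Icc α β)), s ≠ 0 :=
    ae_restrict_of_ae (by simp [ae_iff])
  have hb : ∀ s ∈ Icc α β, s ≠ 0 → |hK k s - hK k M| ≤ Real.log M - Real.log s := by
    intro s hs hs0
    have h2 : Real.log |s| ≤ Real.log M := Real.log_le_log (abs_pos.2 hs0) (hsM s hs)
    rw [Real.log_abs] at h2
    refine (hK_lip k s M).trans ?_
    rw [abs_sub_comm, abs_of_nonneg (by linarith)]
  by_cases hc : 2 * (β - α) ≤ M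
  · calc ∫⁻ s in Icc α β, ENNReal.ofReal |hK k s - hK k M|
        ≤ ∫⁻ s in Icc α β, 4 := by
          apply lintegral_mono_ae
          filter_upwards [h0, ae_restrict_mem measurableSet_Icc] with s hs0 hs
          have h1 := hb s hs hs0
          have h2 : M / 2 ≤ |s| := by
            rcases le_total |α| |β| with h | h
            · have : M = |β| := max_eq_right h
              have h3 : |β| ≤ |s| + |β - s| := by
                have := abs_add_le s (β - s); simpa using this
              have h4 : |β - s| ≤ β - α := by
                rw [abs_of_nonneg (by linarith [hs.2])]; linarith [hs.1]
              linarith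
            · have : M = |α| := max_eq_left h
              have h3 : |α| ≤ |s| + |α - s| := by
                have := abs_add_le s (α - s); simpa using this
              have h4 : |α - s| ≤ β - α := by
                rw [abs_sub_comm, abs_of_nonneg (by linarith [hs.1])]; linarith [hs.2]
              linarith
          have h5 : Real.log (M / 2) ≤ Real.log |s| := Real.log_le_log (by linarith) h2
          rw [Real.log_abs, Real.log_div hM.ne' (by norm_num)] at h5
          have h6 := Real.log_two_lt_d9
          have h7 : |hK k s - hK k M| ≤ 4 := by linarith
          calc ENNReal.ofReal |hK k s - hK k M| ≤ ENNReal.ofReal 4 :=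
                ENNReal.ofReal_le_ofReal h7
            _ = 4 := by norm_num
      _ = 4 * volume (Icc α β) := by simp
  · have hsub : Icc α β ⊆ Icc (-M) M := fun s hs => abs_le.1 (hsM s hs)
    calc ∫⁻ s in Icc α β, ENNReal.ofReal |hK k s - hK k M|
        ≤ ∫⁻ s in Icc α β, ENNReal.ofReal (Real.log M - Real.log s) := by
          apply lintegral_mono_ae
          filter_upwards [h0, ae_restrict_mem measurableSet_Icc] with s hs0 hs
          exact ENNReal.ofReal_le_ofReal (hb s hs hs0)
      _ ≤ ∫⁻ s in Icc (-M) M, ENNReal.ofReal (Real.log M - Real.log s) :=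
          lintegral_mono_set hsub
      _ = ENNReal.ofReal (2 * M) := log_int M hM
      _ ≤ ENNReal.ofReal (4 * (β - α)) := ENNReal.ofReal_le_ofReal (by linarith)
      _ = 4 * volume (Icc α β) := by
          rw [Real.volume_Icc, ENNReal.ofReal_mul (by norm_num)]; norm_num

theorem hK_mul_int {k : ℝ} (hk : 0 ≤ k) {A : G → ℝ} (hA : Integrable A ρG) :
    Integrable (fun x : G => hK k x.1 * A x) ρG := by
  refine hA.bdd_mul (c := k) ((hK_meas k).comp measurable_fst).aestronglyMeasurable ?_
  refine Eventually.of_forall fun x => ?_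
  rw [Real.norm_eq_abs, abs_of_nonneg (hK_nonneg _ _)]
  exact hK_le hk _

theorem atom_bound {k : ℝ} (hk : 0 ≤ k) {A : G → ℝ} (hA : IsAtomG A) :
    |∫ x, hK k x.1 * A x ∂ρG| ≤ 4 := by
  obtain ⟨hi, R, ⟨c, L, r, -, hL, -, hR, -, -⟩, hsupp, hsup, hz⟩ := hA
  obtain ⟨d, hd⟩ := osc k (c.1 - L/2) (c.1 + L/2) (by linarith)
  set I := Icc (c.1 - L/2) (c.1 + L/2)
  set S := (Set.Icc (c.2.1 - L/2) (c.2.1 + L/2) ×ˢ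
         Set.Icc (c.2.2 * Real.exp (-r)) (c.2.2 * Real.exp r))
  have hSm : MeasurableSet S := measurableSet_Icc.prod measurableSet_Icc
  have hRm : MeasurableSet R := by rw [hR]; exact measurableSet_Icc.prod hSm
  have e1 : ∫ x, hK k x.1 * A x ∂ρG = ∫ x, (hK k x.1 - d) * A x ∂ρG := by
    have : (fun x : G => (hK k x.1 - d) * A x) = fun x => hK k x.1 * A x - d * A x := by
      ext x; ring
    rw [this, integral_sub (hK_mul_int hk hi) (hi.const_mul d), integral_const_mul, hz]
    simp
  have hmeas : Measurable fun x : G => ENNReal.ofReal |hK k x.1 - d| :=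
    ENNReal.measurable_ofReal.comp
      (continuous_abs.measurable.comp (((hK_meas k).comp measurable_fst).sub_const d))
  have e2 : ‖∫ x, hK k x.1 * A x ∂ρG‖ₑ ≤ 4 := by
    rw [e1]
    calc ‖∫ x, (hK k x.1 - d) * A x ∂ρG‖ₑ
        ≤ ∫⁻ x, ‖(hK k x.1 - d) * A x‖ₑ ∂ρG := enorm_integral_le_lintegral_enorm _
      _ ≤ ∫⁻ x, R.indicator (fun x => (ρG R)⁻¹ * ENNReal.ofReal |hK k x.1 - d|) x ∂ρG := by
          apply lintegral_mono_ae
          rw [eLpNorm_exponent_top] at hsup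
          filter_upwards [ae_le_eLpNormEssSup (f := A) (μ := ρG)] with x hx
          by_cases hxR : x ∈ R
          · rw [indicator_of_mem hxR, enorm_mul, mul_comm, Real.enorm_eq_ofReal_abs (_ - _)]
            gcongr
            exact hx.trans hsup
          · simp [hsupp x hxR]
      _ = (ρG R)⁻¹ * ∫⁻ x in R, ENNReal.ofReal |hK k x.1 - d| ∂ρG := by
          rw [lintegral_indicator hRm, lintegral_const_mul _ hmeas]
      _ = (ρG R)⁻¹ * ((∫⁻ s in I, ENNReal.ofReal |hK k s - d|) * nuA S) := by
          congr 1
          rw [hR, rhoG_eq, ← Measure.prod_restrict]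
          have h := lintegral_prod_mul (μ := volume.restrict I) (ν := nuA.restrict S)
            (f := fun s => ENNReal.ofReal |hK k s - d|) (g := fun _ => 1)
            (ENNReal.measurable_ofReal.comp
              (continuous_abs.measurable.comp ((hK_meas k).sub_const d))).aemeasurable
            aemeasurable_const
          simpa using h
      _ ≤ (ρG R)⁻¹ * ((4 * volume I) * nuA S) := by gcongr
      _ = 4 * ((ρG R)⁻¹ * ρG R) := by
          have : ρG R = volume I * nuA S := by rw [hR, rhoG_eq, Measure.prod_prod]
          rw [this]; ring
      _ ≤ 4 * 1 := by gcongr; exact ENNReal.inv_mul_le_one _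
      _ = 4 := by simp
  rw [Real.enorm_eq_ofReal_abs] at e2
  have : ENNReal.ofReal |∫ x, hK k x.1 * A x ∂ρG| ≤ ENNReal.ofReal 4 := by
    simpa using e2
  exact (ENNReal.ofReal_le_ofReal_iff (by norm_num)).1 this

theorem pair_bound {k : ℝ} (hk : 0 ≤ k) {f : G → ℝ} (hf : Integrable f ρG)
    {lam : ℕ → ℝ} {A : ℕ → G → ℝ} (hd : IsH1Decomp f lam A) :
    |∫ x, hK k x.1 * f x ∂ρG| ≤ 4 * ∑' j, |lam j| := by
  obtain ⟨hA, hs, ht⟩ := hd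
  have hSi : ∀ N, Integrable (fun x => ∑ j ∈ Finset.range N, lam j * A j x) ρG := fun N =>
    integrable_finsetSum _ fun j _ => (hA j).1.const_mul _
  have hsum : ∀ N, |∫ x, hK k x.1 * (∑ j ∈ Finset.range N, lam j * A j x) ∂ρG|
      ≤ 4 * ∑' j, |lam j| := by
    intro N
    have : (fun x : G => hK k x.1 * (∑ j ∈ Finset.range N, lam j * A j x)) =
        fun x => ∑ j ∈ Finset.range N, lam j * (hK k x.1 * A j x) := by
      ext x; rw [Finset.mul_sum]; exact Finset.sum_congr rfl fun j _ => by ring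
    rw [this, integral_finsetSum _ fun j _ => (hK_mul_int hk (hA j).1).const_mul _]
    refine (Finset.abs_sum_le_sum_abs _ _).trans ?_
    calc ∑ j ∈ Finset.range N, |∫ x, lam j * (hK k x.1 * A j x) ∂ρG|
        ≤ ∑ j ∈ Finset.range N, 4 * |lam j| := by
          apply Finset.sum_le_sum
          intro j _
          rw [integral_const_mul, abs_mul, mul_comm]
          exact mul_le_mul_of_nonneg_right (atom_bound hk (hA j)) (abs_nonneg _)
      _ = 4 * ∑ j ∈ Finset.range N, |lam j| := by rw [Finset.mul_sum]
      _ ≤ 4 * ∑' j, |lam j| := by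
          gcongr
          exact hs.sum_le_tsum _ fun j _ => abs_nonneg _
  have hN : ∀ N, ENNReal.ofReal |∫ x, hK k x.1 * f x ∂ρG| ≤
      ENNReal.ofReal k * eLpNorm (fun x => f x - ∑ j ∈ Finset.range N, lam j * A j x) 1 ρG
        + ENNReal.ofReal (4 * ∑' j, |lam j|) := by
    intro N
    have e1 : ∫ x, hK k x.1 * f x ∂ρG =
        ∫ x, hK k x.1 * (f x - ∑ j ∈ Finset.range N, lam j * A j x) ∂ρG +
        ∫ x, hK k x.1 * (∑ j ∈ Finset.range N, lam j * A j x) ∂ρG := by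
      refine Eq.trans ?_ (integral_add (hK_mul_int hk (hf.sub (hSi N))) (hK_mul_int hk (hSi N)))
      refine integral_congr_ae (Eventually.of_forall fun x => ?_)
      simp only [Pi.sub_apply]; ring
    rw [e1, ← Real.enorm_eq_ofReal_abs]
    refine (enorm_add_le _ _).trans (add_le_add ?_ ?_)
    · refine (enorm_integral_le_lintegral_enorm _).trans ?_
      rw [eLpNorm_one_eq_lintegral_enorm, ← lintegral_const_mul' _ _ ENNReal.ofReal_ne_top]
      apply lintegral_mono
      intro x
      simp only [enorm_mul]
      gcongr
      rw [Real.enorm_eq_ofReal_abs, abs_of_nonneg (hK_nonneg _ _)]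
      exact ENNReal.ofReal_le_ofReal (hK_le hk _)
    · rw [Real.enorm_eq_ofReal_abs]
      exact ENNReal.ofReal_le_ofReal (hsum N)
  have hlim : Tendsto (fun N => ENNReal.ofReal k *
      eLpNorm (fun x => f x - ∑ j ∈ Finset.range N, lam j * A j x) 1 ρG
        + ENNReal.ofReal (4 * ∑' j, |lam j|)) atTop
      (nhds (ENNReal.ofReal k * 0 + ENNReal.ofReal (4 * ∑' j, |lam j|))) :=
    (ENNReal.Tendsto.const_mul ht (Or.inr ENNReal.ofReal_ne_top)).add tendsto_const_nhds
  have := ge_of_tendsto' hlim hN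
  rw [mul_zero, zero_add] at this
  exact (ENNReal.ofReal_le_ofReal_iff
    (mul_nonneg (by norm_num) (tsum_nonneg fun j => abs_nonneg _))).1 this

/-- the one-dimensional profile -/
def uS (s : ℝ) : ℝ := (Ioi (3 : ℝ)).indicator (fun y => (y * Real.log y ^ ((3 : ℝ)/2))⁻¹) s

/-- the cross-section -/
def sS : Set (ℝ × ℝ) := Ioo (-1 : ℝ) 1 ×ˢ Ioo (Real.exp (-1)) (Real.exp 1)

theorem sS_meas : MeasurableSet sS := measurableSet_Ioo.prod measurableSet_Ioo

theorem fS_eq (c0 : ℝ) (x : G) : fSpecial c0 x =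
    uS x.1 * sS.indicator (fun _ => (1:ℝ)) x.2 + R0set.indicator (fun _ => c0) x := by
  unfold fSpecial
  congr 1
  by_cases h1 : 3 < x.1 <;> by_cases h2 : x.2 ∈ sS
  · have : x ∈ domSpecial := ⟨h1, abs_lt.2 h2.1, h2.2⟩
    simp [indicator_of_mem this, h2, uS, h1]
  · have : x ∉ domSpecial := fun h => h2 ⟨abs_lt.1 h.2.1, h.2.2⟩
    simp [indicator_of_notMem this, h2]
  · have : x ∉ domSpecial := fun h => h1 h.1
    simp [indicator_of_notMem this, uS, h1]
  · have : x ∉ domSpecial := fun h => h1 h.1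
    simp [indicator_of_notMem this, uS, h1]

theorem muA_fin : muA (Icc (Real.exp (-1)) (Real.exp 1)) < ∞ := by
  unfold muA
  rw [withDensity_apply _ measurableSet_Icc]
  calc _ ≤ ∫⁻ _ in Icc (Real.exp (-1)) (Real.exp 1), ENNReal.ofReal (Real.exp 1) := by
        apply setLIntegral_mono measurable_const
        intro a ha
        have h0 : 0 < a := (Real.exp_pos _).trans_le ha.1
        rw [if_pos h0]
        apply ENNReal.ofReal_le_ofReal
        calc a⁻¹ ≤ (Real.exp (-1))⁻¹ := inv_anti₀ (Real.exp_pos _) ha.1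
          _ = Real.exp 1 := by rw [Real.exp_neg, inv_inv]
    _ < ∞ := by
        rw [setLIntegral_const, Real.volume_Icc]
        exact ENNReal.mul_lt_top ENNReal.ofReal_lt_top ENNReal.ofReal_lt_top

theorem muA_pos : 0 < muA (Ioo (Real.exp (-1)) (Real.exp 1)) := by
  unfold muA
  rw [withDensity_apply _ measurableSet_Ioo]
  have h1 : Real.exp (-1) < Real.exp 1 := Real.exp_lt_exp.2 (by norm_num)
  calc 0 < ∫⁻ _ in Ioo (Real.exp (-1)) (Real.exp 1), ENNReal.ofReal (Real.exp 1)⁻¹ := by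
        rw [setLIntegral_const, Real.volume_Ioo]
        apply ENNReal.mul_pos
        · simp [Real.exp_pos]
        · simp
    _ ≤ _ := by
        apply setLIntegral_mono dens_meas
        intro a ha
        have h0 : 0 < a := (Real.exp_pos _).trans ha.1
        rw [if_pos h0]
        exact ENNReal.ofReal_le_ofReal (inv_anti₀ h0 ha.2.le)

theorem nuS_fin : nuA sS < ∞ := by
  unfold nuA sS
  rw [Measure.prod_prod]
  exact ENNReal.mul_lt_top (by simp) ((measure_mono Ioo_subset_Icc_self).trans_lt muA_fin)

theorem nuS_pos : 0 < nuA sS := by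
  unfold nuA sS
  rw [Measure.prod_prod]
  exact ENNReal.mul_pos (by simp) muA_pos.ne'

theorem R0_meas : MeasurableSet R0set :=
  measurableSet_Icc.prod (measurableSet_Icc.prod measurableSet_Icc)

theorem R0_fin : ρG R0set < ∞ := by
  unfold R0set
  rw [rhoG_eq, Measure.prod_prod, nuA, Measure.prod_prod]
  exact ENNReal.mul_lt_top (by simp) (ENNReal.mul_lt_top (by simp) muA_fin)

theorem uS_int : Integrable uS := by
  have : IntegrableOn (fun y => (y * Real.log y ^ ((3 : ℝ)/2))⁻¹) (Ioi (3:ℝ)) := by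
    apply integrableOn_Ioi_deriv_of_nonneg' (g := fun y => (-2) * Real.log y ^ (-(1:ℝ)/2))
      (l := (-2) * 0)
    · intro y hy
      have hy3 : (3:ℝ) ≤ y := hy
      have hl : 0 < Real.log y := Real.log_pos (by linarith)
      have h := ((Real.hasDerivAt_log (show y ≠ 0 by linarith)).rpow_const
        (p := -(1:ℝ)/2) (Or.inl hl.ne')).const_mul (-2)
      refine h.congr_deriv ?_
      have e : (-(1:ℝ)/2 - 1) = -(3/2) := by norm_num
      rw [e, Real.rpow_neg hl.le, mul_inv]
      ring
    · intro y hy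
      have hy3 : (3:ℝ) < y := hy
      have hl : 0 < Real.log y := Real.log_pos (by linarith)
      positivity
    · apply Tendsto.const_mul
      have := (tendsto_rpow_neg_atTop (show (0:ℝ) < 1/2 by norm_num)).comp Real.tendsto_log_atTop
      refine this.congr fun x => ?_
      simp only [Function.comp]
      norm_num
  exact (integrable_indicator_iff measurableSet_Ioi).2 this

theorem v_int : Integrable (sS.indicator (fun _ => (1:ℝ))) nuA :=
  (integrable_indicator_iff sS_meas).2 (integrableOn_const nuS_fin.ne)

theorem fS_int (c0 : ℝ) : Integrable (fSpecial c0) ρG := by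
  have h1 : Integrable (fun x : G => uS x.1 * sS.indicator (fun _ => (1:ℝ)) x.2) ρG := by
    rw [rhoG_eq]; exact uS_int.mul_prod v_int
  have h2 : Integrable (R0set.indicator (fun _ => c0)) ρG :=
    (integrable_indicator_iff R0_meas).2 (integrableOn_const R0_fin.ne)
  refine (h1.add h2).congr (Eventually.of_forall fun x => ?_)
  rw [fS_eq]; rfl

theorem pair_eq (c0 k : ℝ) : ∫ x, hK k x.1 * fSpecial c0 x ∂ρG =
    (∫ s, hK k s * uS s) * (nuA sS).toReal := by
  have : ∀ x : G, hK k x.1 * fSpecial c0 x =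
      (hK k x.1 * uS x.1) * sS.indicator (fun _ => (1:ℝ)) x.2 := by
    intro x
    rw [fS_eq]
    by_cases hx : x ∈ R0set
    · have h1 : |x.1| ≤ 1 := abs_le.2 hx.1
      have h2 : Real.log x.1 ≤ 0 := by
        rw [← Real.log_abs]; exact Real.log_nonpos (abs_nonneg _) h1
      have h3 : hK k x.1 = 0 := max_eq_right ((min_le_left _ _).trans h2)
      simp [h3]
    · rw [indicator_of_notMem hx]; ring
  simp_rw [this]
  rw [rhoG_eq, integral_prod_mul (fun s => hK k s * uS s) (sS.indicator (fun _ => (1:ℝ)))]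
  congr 1
  rw [integral_indicator_const _ sS_meas]
  simp [Measure.real]

theorem uS_nonneg (s : ℝ) : 0 ≤ uS s := by
  apply indicator_nonneg
  intro y hy
  have hy3 : (3:ℝ) < y := hy
  have hl : 0 < Real.log y := Real.log_pos (by linarith)
  positivity

theorem low (k : ℝ) (hk : Real.log 3 ≤ k) :
    2 * k ^ ((1:ℝ)/2) - 2 * Real.log 3 ^ ((1:ℝ)/2) ≤ ∫ s, hK k s * uS s := by
  have hl3 : 0 < Real.log 3 := Real.log_pos (by norm_num)
  have hk0 : 0 ≤ k := hl3.le.trans hk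
  have h3 : (3:ℝ) ≤ Real.exp k := by
    rw [← Real.exp_log (show (0:ℝ) < 3 by norm_num)]; exact Real.exp_le_exp.2 hk
  have hI : Integrable fun s => hK k s * uS s := by
    refine uS_int.bdd_mul (c := k) (hK_meas k).aestronglyMeasurable ?_
    refine Eventually.of_forall fun x => ?_
    rw [Real.norm_eq_abs, abs_of_nonneg (hK_nonneg _ _)]
    exact hK_le hk0 _
  have hder : ∀ y ∈ uIcc 3 (Real.exp k), HasDerivAt (fun y => 2 * Real.log y ^ ((1:ℝ)/2))
      (y⁻¹ * Real.log y ^ (-(1:ℝ)/2)) y := by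
    intro y hy
    rw [uIcc_of_le h3] at hy
    have hy3 : (3:ℝ) ≤ y := hy.1
    have hl : 0 < Real.log y := Real.log_pos (by linarith)
    have h := ((Real.hasDerivAt_log (show y ≠ 0 by linarith)).rpow_const
      (p := (1:ℝ)/2) (Or.inl hl.ne')).const_mul 2
    refine h.congr_deriv ?_
    have e : ((1:ℝ)/2 - 1) = -1/2 := by norm_num
    rw [e]; ring
  have hcont : ContinuousOn (fun y : ℝ => y⁻¹ * Real.log y ^ (-(1:ℝ)/2)) (uIcc 3 (Real.exp k)) := by
    rw [uIcc_of_le h3]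
    intro y hy
    have hy3 : (3:ℝ) ≤ y := hy.1
    have hl : 0 < Real.log y := Real.log_pos (by linarith)
    have hy0 : y ≠ 0 := by linarith
    exact ((continuousAt_inv₀ hy0).mul
      ((Real.continuousAt_log hy0).rpow_const (Or.inl hl.ne'))).continuousWithinAt
  have hF := intervalIntegral.integral_eq_sub_of_hasDerivAt hder hcont.intervalIntegrable
  rw [Real.log_exp] at hF
  rw [← hF, intervalIntegral.integral_of_le h3]
  calc ∫ y in Ioc 3 (Real.exp k), y⁻¹ * Real.log y ^ (-(1:ℝ)/2)
      = ∫ y in Ioc 3 (Real.exp k), hK k y * uS y := by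
        apply setIntegral_congr_fun measurableSet_Ioc
        intro y hy
        have hy3 : (3:ℝ) < y := hy.1
        have hl : 0 < Real.log y := Real.log_pos (by linarith)
        have h1 : Real.log y ≤ k := by
          rw [← Real.log_exp k]; exact Real.log_le_log (by linarith) hy.2
        have h2 : hK k y = Real.log y := by
          unfold hK; rw [min_eq_left h1, max_eq_left hl.le]
        have h4 : uS y = (y * Real.log y ^ ((3 : ℝ)/2))⁻¹ := indicator_of_mem hy3 _
        simp only [h2, h4]
        have e : -(1:ℝ)/2 = 1 - 3/2 := by norm_num
        rw [e, Real.rpow_sub hl, Real.rpow_one, mul_inv]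
        ring
    _ ≤ ∫ y, hK k y * uS y :=
        setIntegral_le_integral hI
          (Eventually.of_forall fun s => mul_nonneg (hK_nonneg _ _) (uS_nonneg _))

theorem fSpecial_L1_not_H1 :
    ∀ c0 : ℝ, (∫ x, fSpecial c0 x ∂ρG) = 0 →
      Integrable (fSpecial c0) ρG ∧ ¬ MemH1 (fSpecial c0) := by
  intro c0 _
  refine ⟨fS_int c0, ?_⟩
  rintro ⟨hf, lam, A, hd⟩
  have hm : 0 < (nuA sS).toReal := ENNReal.toReal_pos nuS_pos.ne' nuS_fin.ne
  have hl3 : 0 < Real.log 3 := Real.log_pos (by norm_num)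
  have key : ∀ k, Real.log 3 ≤ k →
      (2 * k ^ ((1:ℝ)/2) - 2 * Real.log 3 ^ ((1:ℝ)/2)) * (nuA sS).toReal
        ≤ 4 * ∑' j, |lam j| := by
    intro k hk
    have h1 := pair_bound (hl3.le.trans hk) hf hd
    rw [pair_eq] at h1
    exact (mul_le_mul_of_nonneg_right (low k hk) hm.le).trans ((le_abs_self _).trans h1)
  have ht : Tendsto (fun k : ℝ => (2 * k ^ ((1:ℝ)/2) - 2 * Real.log 3 ^ ((1:ℝ)/2))
      * (nuA sS).toReal) atTop atTop := by
    apply Tendsto.atTop_mul_const hm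
    exact tendsto_atTop_add_const_right _ _
      ((tendsto_rpow_atTop (by norm_num)).const_mul_atTop (by norm_num))
  obtain ⟨k, hk1, hk2⟩ := ((ht.eventually_gt_atTop (4 * ∑' j, |lam j|)).and
    (eventually_ge_atTop (Real.log 3))).exists
  exact absurd (key k hk2) (not_le.2 hk1)
end
end
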